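/- Let d ≥ 1 be an integer. There exist constants C = C(d) > 0 and c = c(d) > 0 such that for every 1 ≤ p ≤ ∞, every j ∈ ℤ, every t > 0, and every f ∈ 𝒮(ℝ^d), the function u_j(x) := (2π)^{−d} ∫_{ℝ^d} e^{i x·ξ} (1 + t|ξ|) e^{−t|ξ|} φ̂₀(2^{−j}ξ) F[f](ξ) dξ satisfies ‖u_j‖_{L^p(ℝ^d)} ≤ C e^{−c 2^j t} ‖Δ_j f‖_{L^p(ℝ^d)}. (Dissipative estimate on Littlewood–Paley blocks for the multipliers (1 + t|ξ|) e^{−t|ξ|}, covering the kernels K^{(3)}, K^{(4)}, K^{(5)} of the linear Stokes solution formula.) -/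

import Mathlib

/-!
Localized to frequencies `|ξ| ~ 2^j`, the multiplier `(1 + t|ξ|) e^{-t|ξ|}` is convolution with a
kernel whose `L¹` norm is exponentially small in `s = 2^j t`, so the estimate is Young's inequality.

On the support of the Fourier transform of `Δ_j f`, an annulus at scale `2^j`, the multiplier
agrees with `m_s(2^{-j}ξ)`, where `m_s(ξ) = χ(ξ) ψ(s|ξ|)`, `ψ(r) = (1 + r) e^{-r}`, and `χ` is a
cutoff to a slightly larger annulus. Every derivative of `ψ` is `O(e^{-ar})` for each `a < 1`, so by
Faà di Bruno's formula the `n`-th derivative of `m_s` is at most `(1 + s)^n e^{-a r₀ s}` up to a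
constant, `r₀` being the inner radius of the larger annulus. A slightly smaller rate absorbs the
polynomial factor, and every Schwartz seminorm of `m_s` is `O(e^{-bs})`. So is `‖𝓕⁻ m_s‖_{L¹}`, a
continuous seminorm of `m_s` on the Schwartz space. Finally, the kernel of `m_s(2^{-j}ξ)` is an
`L¹`-normalized dilate of `𝓕⁻ m_s` and has the same norm.
-/

open MeasureTheory Filter Complex
open scoped ENNReal NNReal RealInnerProductSpace Topology

noncomputable section

abbrev Rd (d : ℕ) := EuclideanSpace ℝ (Fin d)

/-- Fourier transform with the paper's convention `F[f](ξ) = ∫ e^{-i x·ξ} f(x) dx`. -/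
def FT {d : ℕ} (f : Rd d → ℂ) (ξ : Rd d) : ℂ :=
  ∫ x : Rd d, Complex.exp (-Complex.I * (↑(⟪x, ξ⟫) : ℂ)) * f x

/-- A Littlewood–Paley family: a Schwartz function `φ₀` whose Fourier transform is
real, takes values in `[0,1]`, is supported in the annulus `1/2 ≤ |ξ| ≤ 2`, and whose
dyadic dilates sum to `1` away from the origin. -/
structure LPData (d : ℕ) where
  φ : SchwartzMap (Rd d) ℂ
  him : ∀ ξ : Rd d, (FT (⇑φ) ξ).im = 0
  h0 : ∀ ξ : Rd d, 0 ≤ (FT (⇑φ) ξ).re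
  h1 : ∀ ξ : Rd d, (FT (⇑φ) ξ).re ≤ 1
  hsupp : ∀ ξ : Rd d, FT (⇑φ) ξ ≠ 0 → (1/2 : ℝ) ≤ ‖ξ‖ ∧ ‖ξ‖ ≤ 2
  hsum : ∀ ξ : Rd d, ξ ≠ 0 → HasSum (fun j : ℤ => FT (⇑φ) ((2:ℝ) ^ (-j) • ξ)) 1

/-- Littlewood–Paley block `Δ_j f = φ_j * f`, where `φ_j(x) = 2^{dj} φ₀(2^j x)`. -/
def LP {d : ℕ} (P : LPData d) (j : ℤ) (f : Rd d → ℂ) (x : Rd d) : ℂ :=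
  ∫ y : Rd d, (((2:ℝ) ^ ((d : ℤ) * j) : ℝ) : ℂ) * P.φ ((2:ℝ) ^ j • y) * f (x - y)

/-- `ℓ^r(ℤ)`-norm of a family of extended nonnegative reals. -/
def ellNorm (r : ℝ≥0∞) (a : ℤ → ℝ≥0∞) : ℝ≥0∞ :=
  if r = ∞ then ⨆ j, a j else (∑' j, a j ^ r.toReal) ^ (1 / r.toReal)

/-- Homogeneous Besov norm `‖f‖_{Ḃ^s_{p,r}}`. -/
def besov {d : ℕ} (P : LPData d) (s : ℝ) (p r : ℝ≥0∞) (f : Rd d → ℂ) : ℝ≥0∞ :=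
  ellNorm r fun j => ENNReal.ofReal ((2:ℝ) ^ (s * (j:ℝ))) * eLpNorm (LP P j f) p volume

/-- Mixed norm `L^q_t(0,∞; L^p_x)`. -/
def LqLp {d : ℕ} (q p : ℝ≥0∞) (g : ℝ → Rd d → ℂ) : ℝ≥0∞ :=
  if q = ∞ then essSup (fun t => eLpNorm (g t) p volume) (volume.restrict (Set.Ioi (0:ℝ)))
  else (∫⁻ t in Set.Ioi (0:ℝ), (eLpNorm (g t) p volume) ^ q.toReal) ^ (1 / q.toReal)

/-- Chemin–Lerner norm `‖f‖_{L̃^q(Ḃ^s_{p,r})}` on `ℝ^d × (0,∞)`. -/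
def CL {d : ℕ} (P : LPData d) (s : ℝ) (q p r : ℝ≥0∞) (f : ℝ → Rd d → ℂ) : ℝ≥0∞ :=
  ellNorm r fun j => ENNReal.ofReal ((2:ℝ) ^ (s * (j:ℝ))) * LqLp q p fun t => LP P j (f t)

/-- `f : ℝ^d × (0,∞) → ℂ` (curried as `f t x`) is slice-Schwartz: continuous on
`ℝ^d × (0,∞)` and Schwartz in `x` for each fixed `t > 0`. -/
def SliceSchwartz {d : ℕ} (f : ℝ → Rd d → ℂ) : Prop :=
  ContinuousOn (fun z : Rd d × ℝ => f z.2 z.1) (Set.univ ×ˢ Set.Ioi 0) ∧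
  ∀ t : ℝ, 0 < t → ∃ g : SchwartzMap (Rd d) ℂ, f t = ⇑g

open scoped Convolution ContDiff

/-! ### Young's inequality -/

lemma lintegral_mul_rpow_le {α : Type*} [MeasurableSpace α] {ν : Measure α} {u v : α → ℝ≥0∞}
    (hu : AEMeasurable u ν) (hv : AEMeasurable v ν) {q : ℝ} (hq : 1 ≤ q) :
    (∫⁻ y, u y * v y ∂ν) ^ q ≤ (∫⁻ y, u y ∂ν) ^ (q - 1) * ∫⁻ y, u y * v y ^ q ∂ν := by
  rcases hq.eq_or_lt with rfl | hq
  · simp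
  have hpq := (Real.HolderConjugate.conjExponent hq).symm
  set q' := q.conjExponent
  have hsplit (y) : u y ^ q'⁻¹ * (u y ^ q⁻¹ * v y) = u y * v y := by
    rw [← mul_assoc, ← ENNReal.rpow_add_of_nonneg _ _ hpq.inv_nonneg hpq.symm.inv_nonneg,
      hpq.inv_add_inv_eq_one, ENNReal.rpow_one]
  have hholder := ENNReal.lintegral_mul_le_Lp_mul_Lq ν hpq
    (hu.pow_const q'⁻¹) ((hu.pow_const q⁻¹).mul hv)
  simp only [Pi.mul_apply, hsplit, ENNReal.mul_rpow_of_nonneg _ _ hpq.symm.nonneg,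
    ENNReal.rpow_inv_rpow hpq.ne_zero, ENNReal.rpow_inv_rpow hpq.symm.ne_zero, one_div] at hholder
  calc (∫⁻ y, u y * v y ∂ν) ^ q
      ≤ ((∫⁻ y, u y ∂ν) ^ q'⁻¹ * (∫⁻ y, u y * v y ^ q ∂ν) ^ q⁻¹) ^ q := by
        gcongr
    _ = (∫⁻ y, u y ∂ν) ^ (q - 1) * ∫⁻ y, u y * v y ^ q ∂ν := by
        rw [ENNReal.mul_rpow_of_nonneg _ _ hpq.symm.nonneg, ← ENNReal.rpow_mul,
          ENNReal.rpow_inv_rpow hpq.symm.ne_zero, inv_mul_eq_div, hpq.symm.div_conj_eq_sub_one]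

section Young

variable {G : Type*} [AddCommGroup G] [MeasurableSpace G] [MeasurableAdd₂ G] [MeasurableNeg G]
  {μ : Measure G} [μ.IsAddLeftInvariant]

lemma eLpNorm_top_lconvolution_le [μ.IsNegInvariant] {u : G → ℝ≥0∞}
    (hu : AEMeasurable u μ) (v : G → ℝ≥0∞) :
    eLpNorm (u ⋆ₗ[μ] v) ∞ μ ≤ eLpNorm u 1 μ * eLpNorm v ∞ μ := by
  simp only [eLpNorm_exponent_top, eLpNorm_one_eq_lintegral_enorm, enorm_eq_self]
  refine eLpNormEssSup_le_of_ae_enorm_bound (Eventually.of_forall fun x => ?_)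
  have hv : ∀ᵐ y ∂μ, v (-y + x) ≤ eLpNormEssSup v μ := by
    simp only [neg_add_eq_sub]
    exact (Measure.measurePreserving_sub_left μ x).quasiMeasurePreserving.ae
      (ae_le_eLpNormEssSup (f := v))
  calc (u ⋆ₗ[μ] v) x ≤ ∫⁻ y, u y * eLpNormEssSup v μ ∂μ :=
        lintegral_mono_ae (hv.mono fun y hy => by gcongr)
    _ = (∫⁻ y, u y ∂μ) * eLpNormEssSup v μ := lintegral_mul_const'' _ hu

variable [SFinite μ]

lemma lintegral_lconvolution {u v : G → ℝ≥0∞} (hu : AEMeasurable u μ) (hv : AEMeasurable v μ) :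
    ∫⁻ x, (u ⋆ₗ[μ] v) x ∂μ = (∫⁻ x, u x ∂μ) * ∫⁻ x, v x ∂μ := by
  simp only [lconvolution_def]
  rw [lintegral_lintegral_swap (by fun_prop)]
  calc ∫⁻ y, ∫⁻ x, u y * v (-y + x) ∂μ ∂μ = ∫⁻ y, u y * ∫⁻ x, v x ∂μ ∂μ := by
        refine lintegral_congr fun y => ?_
        rw [lintegral_const_mul'' _ (by fun_prop), lintegral_add_left_eq_self v]
    _ = (∫⁻ x, u x ∂μ) * ∫⁻ x, v x ∂μ := lintegral_mul_const'' _ hu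

lemma lconvolution_rpow_le {u v : G → ℝ≥0∞} (hu : AEMeasurable u μ) (hv : AEMeasurable v μ)
    {q : ℝ} (hq : 1 ≤ q) (x : G) :
    (u ⋆ₗ[μ] v) x ^ q ≤ (∫⁻ y, u y ∂μ) ^ (q - 1) * (u ⋆ₗ[μ] fun y => v y ^ q) x :=
  lintegral_mul_rpow_le hu (by fun_prop) hq

lemma eLpNorm_lconvolution_le [μ.IsNegInvariant] {u v : G → ℝ≥0∞}
    (hu : AEMeasurable u μ) (hv : AEMeasurable v μ) {p : ℝ≥0∞} (hp : 1 ≤ p) :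
    eLpNorm (u ⋆ₗ[μ] v) p μ ≤ eLpNorm u 1 μ * eLpNorm v p μ := by
  rcases eq_or_ne p ∞ with rfl | hp_top
  · exact eLpNorm_top_lconvolution_le hu v
  have hp₀ : p ≠ 0 := (one_pos.trans_le hp).ne'
  have hq : 1 ≤ p.toReal := by simpa using ENNReal.toReal_mono hp_top hp
  set q := p.toReal
  rw [eLpNorm_eq_lintegral_rpow_enorm_toReal hp₀ hp_top,
    eLpNorm_eq_lintegral_rpow_enorm_toReal hp₀ hp_top, eLpNorm_one_eq_lintegral_enorm, one_div,
    ENNReal.rpow_inv_le_iff (by positivity), ENNReal.mul_rpow_of_nonneg _ _ (by positivity),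
    ENNReal.rpow_inv_rpow (by positivity)]
  simp only [enorm_eq_self]
  calc ∫⁻ x, (u ⋆ₗ[μ] v) x ^ q ∂μ
      ≤ ∫⁻ x, (∫⁻ y, u y ∂μ) ^ (q - 1) * (u ⋆ₗ[μ] fun y => v y ^ q) x ∂μ :=
        lintegral_mono (lconvolution_rpow_le hu hv hq)
    _ = (∫⁻ y, u y ∂μ) ^ (q - 1) * ((∫⁻ y, u y ∂μ) * ∫⁻ y, v y ^ q ∂μ) := by
        rw [lintegral_const_mul'' _ (by fun_prop), lintegral_lconvolution hu (by fun_prop)]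
    _ = (∫⁻ y, u y ∂μ) ^ q * ∫⁻ y, v y ^ q ∂μ := by
        rw [← mul_assoc]
        nth_rw 2 [← ENNReal.rpow_one (∫⁻ y, u y ∂μ)]
        rw [← ENNReal.rpow_add_of_nonneg _ _ (by linarith) zero_le_one, sub_add_cancel]

lemma eLpNorm_convolution_le [μ.IsNegInvariant] {𝕜 E E' F : Type*} [NontriviallyNormedField 𝕜]
    [NormedAddCommGroup E] [NormedSpace 𝕜 E] [NormedAddCommGroup E'] [NormedSpace 𝕜 E']
    [NormedAddCommGroup F] [NormedSpace 𝕜 F] [NormedSpace ℝ F]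
    (L : E →L[𝕜] E' →L[𝕜] F) {f : G → E} {g : G → E'}
    (hf : AEStronglyMeasurable f μ) (hg : AEStronglyMeasurable g μ) {p : ℝ≥0∞} (hp : 1 ≤ p) :
    eLpNorm (f ⋆[L, μ] g) p μ ≤ ‖L‖ₑ * (eLpNorm f 1 μ * eLpNorm g p μ) := by
  set u : G → ℝ≥0∞ := fun y => ‖f y‖ₑ with hu
  set v : G → ℝ≥0∞ := fun y => ‖g y‖ₑ with hv
  have hpoint (x) : ‖(f ⋆[L, μ] g) x‖ₑ ≤ ‖L‖ₑ * ‖(u ⋆ₗ[μ] v) x‖ₑ := by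
    rw [enorm_eq_self, lconvolution_def, ← lintegral_const_mul' _ _ enorm_ne_top]
    refine (enorm_integral_le_lintegral_enorm _).trans (lintegral_mono fun y => ?_)
    rw [neg_add_eq_sub, ← mul_assoc]
    refine ((L (f y)).le_opENorm _).trans ?_
    gcongr
    exact L.le_opENorm _
  calc eLpNorm (f ⋆[L, μ] g) p μ ≤ ‖L‖ₑ * eLpNorm (u ⋆ₗ[μ] v) p μ :=
        eLpNorm_le_mul_eLpNorm_of_ae_le_mul'' p (by fun_prop) (Eventually.of_forall hpoint)
    _ ≤ ‖L‖ₑ * (eLpNorm u 1 μ * eLpNorm v p μ) := by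
        gcongr
        exact eLpNorm_lconvolution_le hf.enorm hg.enorm hp
    _ = ‖L‖ₑ * (eLpNorm f 1 μ * eLpNorm g p μ) := by rw [hu, hv, eLpNorm_enorm, eLpNorm_enorm]

end Young

/-! ### Symbols with exponentially decaying derivatives -/

/-- The class of profiles `ψ` for which the Fourier multipliers `ψ(t|ξ|)` are dissipative: all
derivatives are `O(e^{-ar})` on the half-line `r ≥ 0` where `t|ξ|` lives. Smoothness is required on
all of `ℝ`, so that no one-sided derivatives at `0` enter. -/
structure HasExpDecayDerivs {F : Type*} [NormedAddCommGroup F] [NormedSpace ℝ F]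
    (a : ℝ) (ψ : ℝ → F) : Prop where
  contDiff : ContDiff ℝ ∞ ψ
  exists_norm_iteratedDeriv_le (n : ℕ) :
    ∃ C : ℝ, ∀ r, 0 ≤ r → ‖iteratedDeriv n ψ r‖ ≤ C * Real.exp (-(a * r))

lemma one_add_pow_le_mul_exp {δ : ℝ} (hδ : 0 < δ) (n : ℕ) {s : ℝ} (hs : 0 ≤ s) :
    (1 + s) ^ n ≤ n.factorial / δ ^ n * Real.exp δ * Real.exp (δ * s) := by
  have h := Real.pow_div_factorial_le_exp (x := δ * (1 + s)) (by positivity) n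
  rw [mul_pow, div_le_iff₀ (by positivity)] at h
  rw [mul_assoc, ← Real.exp_add, div_mul_eq_mul_div, le_div_iff₀ (by positivity)]
  calc (1 + s) ^ n * δ ^ n ≤ Real.exp (δ * (1 + s)) * n.factorial := by linarith
    _ = n.factorial * Real.exp (δ + δ * s) := by ring_nf

section Symbol

variable {E F : Type*} [NormedAddCommGroup E] [NormedSpace ℝ E]
  [NormedAddCommGroup F] [NormedSpace ℝ F] {a b r₀ : ℝ} {ψ : ℝ → F} {U K : Set E} {ρ χ : E → ℝ}

lemma HasExpDecayDerivs.exists_norm_iteratedFDeriv_le_of_le (hψ : HasExpDecayDerivs a ψ) (n : ℕ) :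
    ∃ C : ℝ, 0 ≤ C ∧ ∀ i ≤ n, ∀ r, 0 ≤ r → ‖iteratedFDeriv ℝ i ψ r‖ ≤ C * Real.exp (-(a * r)) := by
  choose C hC using hψ.exists_norm_iteratedDeriv_le
  obtain ⟨M, hM⟩ := ((Set.finite_Iic n).image C).bddAbove
  refine ⟨max M 0, le_max_right _ _, fun i hi r hr => ?_⟩
  rw [norm_iteratedFDeriv_eq_norm_iteratedDeriv]
  refine (hC i r hr).trans ?_
  gcongr
  exact (hM ⟨i, hi, rfl⟩).trans (le_max_left _ _)

lemma exists_norm_iteratedFDerivWithin_le_of_isCompact (hU : IsOpen U) (hK : IsCompact K)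
    (hKU : K ⊆ U) {f : E → F} (hf : ContDiffOn ℝ ∞ f U) (n : ℕ) :
    ∃ M : ℝ, 0 ≤ M ∧ ∀ i ≤ n, ∀ x ∈ K, ‖iteratedFDerivWithin ℝ i f U x‖ ≤ M := by
  have hbound (i : ℕ) : ∃ M : ℝ, ∀ x ∈ K, ‖iteratedFDerivWithin ℝ i f U x‖ ≤ M :=
    hK.exists_bound_of_continuousOn <|
      (hf.continuousOn_iteratedFDerivWithin (mod_cast le_top) hU.uniqueDiffOn).mono hKU
  choose B hB using hbound
  obtain ⟨M, hM⟩ := ((Set.finite_Iic n).image B).bddAbove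
  exact ⟨max M 0, le_max_right _ _, fun i hi x hx =>
    (hB i x hx).trans ((hM ⟨i, hi, rfl⟩).trans (le_max_left _ _))⟩

lemma exists_norm_iteratedFDerivWithin_const_mul_le_pow (hU : IsOpen U) (hK : IsCompact K)
    (hKU : K ⊆ U) (hρ : ContDiffOn ℝ ∞ ρ U) (n : ℕ) :
    ∃ N : ℝ, 0 ≤ N ∧ ∀ s, 0 ≤ s → ∀ x ∈ K, ∀ i, 1 ≤ i → i ≤ n →
      ‖iteratedFDerivWithin ℝ i (fun y => s * ρ y) U x‖ ≤ ((1 + s) * N) ^ i := by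
  obtain ⟨M, -, hM⟩ := exists_norm_iteratedFDerivWithin_le_of_isCompact hU hK hKU hρ n
  refine ⟨max M 1, by positivity, fun s hs x hx i hi₁ hi => ?_⟩
  have hsmul := iteratedFDerivWithin_const_smul_apply (i := i) (a := s)
    ((hρ x (hKU hx)).of_le (mod_cast le_top)) hU.uniqueDiffOn (hKU hx)
  calc ‖iteratedFDerivWithin ℝ i (s • ρ) U x‖ = s * ‖iteratedFDerivWithin ℝ i ρ U x‖ := by
        rw [hsmul, norm_smul, Real.norm_of_nonneg hs]
    _ ≤ (1 + s) * max M 1 := by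
        gcongr
        · linarith
        · exact (hM i hi x hx).trans (le_max_left _ _)
    _ ≤ ((1 + s) * max M 1) ^ i :=
        le_self_pow₀ (one_le_mul_of_one_le_of_one_le (by linarith) (le_max_right _ _)) (by omega)

lemma HasExpDecayDerivs.exists_norm_iteratedFDerivWithin_comp_le (hψ : HasExpDecayDerivs a ψ)
    (hU : IsOpen U) (hK : IsCompact K) (hKU : K ⊆ U) (hρ : ContDiffOn ℝ ∞ ρ U)
    (ha : 0 ≤ a) (hr₀ : 0 ≤ r₀) (hρK : ∀ x ∈ K, r₀ ≤ ρ x) (hb : b < a * r₀) (n : ℕ) :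
    ∃ C : ℝ, 0 ≤ C ∧ ∀ s, 0 ≤ s → ∀ x ∈ K,
      ‖iteratedFDerivWithin ℝ n (fun y => ψ (s * ρ y)) U x‖ ≤ C * Real.exp (-(b * s)) := by
  obtain ⟨A, hA₀, hA⟩ := hψ.exists_norm_iteratedFDeriv_le_of_le n
  obtain ⟨N, hN₀, hinner⟩ := exists_norm_iteratedFDerivWithin_const_mul_le_pow hU hK hKU hρ n
  set δ := a * r₀ - b
  have hδ : 0 < δ := sub_pos.2 hb
  set B := n.factorial / δ ^ n * Real.exp δ
  refine ⟨n.factorial * A * N ^ n * B, by positivity, fun s hs x hx => ?_⟩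
  have houter (i : ℕ) (hi : i ≤ n) :
      ‖iteratedFDerivWithin ℝ i ψ Set.univ (s * ρ x)‖ ≤ A * Real.exp (-(a * r₀ * s)) := by
    have hρx := hρK x hx
    rw [iteratedFDerivWithin_univ]
    refine (hA i hi _ (mul_nonneg hs (hr₀.trans hρx))).trans ?_
    rw [mul_assoc, mul_comm r₀]
    gcongr
  calc ‖iteratedFDerivWithin ℝ n (ψ ∘ fun y => s * ρ y) U x‖
      ≤ n.factorial * (A * Real.exp (-(a * r₀ * s))) * ((1 + s) * N) ^ n :=
        norm_iteratedFDerivWithin_comp_le hψ.contDiff.contDiffOn (contDiffOn_const.mul hρ)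
          (mod_cast le_top) uniqueDiffOn_univ hU.uniqueDiffOn (Set.mapsTo_univ _ _) (hKU hx)
          houter (hinner s hs x hx)
    _ = n.factorial * A * N ^ n * ((1 + s) ^ n * Real.exp (-(a * r₀ * s))) := by
        rw [mul_pow]; ring
    _ ≤ n.factorial * A * N ^ n * (B * Real.exp (δ * s) * Real.exp (-(a * r₀ * s))) := by
        gcongr
        exact one_add_pow_le_mul_exp hδ n hs
    _ = n.factorial * A * N ^ n * B * Real.exp (-(b * s)) := by
        rw [mul_assoc B, ← Real.exp_add, ← mul_assoc]
        congr 2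
        ring

lemma HasExpDecayDerivs.exists_norm_iteratedFDeriv_cutoff_smul_comp_le
    (hψ : HasExpDecayDerivs a ψ) (hU : IsOpen U)
    (hχ : ContDiff ℝ ∞ χ) (hχc : HasCompactSupport χ) (hχU : tsupport χ ⊆ U)
    (hρ : ContDiffOn ℝ ∞ ρ U) (ha : 0 ≤ a) (hr₀ : 0 ≤ r₀) (hρχ : ∀ x ∈ tsupport χ, r₀ ≤ ρ x)
    (hb : b < a * r₀) (n : ℕ) :
    ∃ C : ℝ, ∀ s, 0 ≤ s → ∀ x,
      ‖iteratedFDeriv ℝ n (fun y => χ y • ψ (s * ρ y)) x‖ ≤ C * Real.exp (-(b * s)) := by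
  obtain ⟨M, hM₀, hM⟩ :=
    exists_norm_iteratedFDerivWithin_le_of_isCompact hU hχc hχU hχ.contDiffOn n
  choose C hC₀ hC using
    hψ.exists_norm_iteratedFDerivWithin_comp_le hU hχc hχU hρ ha hr₀ hρχ hb
  refine ⟨∑ i ∈ Finset.range (n + 1), n.choose i * M * C (n - i), fun s hs x => ?_⟩
  by_cases hx : x ∈ tsupport χ
  · rw [← iteratedFDerivWithin_of_isOpen n hU (hχU hx), Finset.sum_mul]
    refine (norm_iteratedFDerivWithin_smul_le hχ.contDiffOn
      (hψ.contDiff.comp_contDiffOn (contDiffOn_const.mul hρ)) hU.uniqueDiffOn (hχU hx)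
      (mod_cast le_top)).trans (Finset.sum_le_sum fun i hi => ?_)
    rw [mul_assoc _ (C _)]
    gcongr
    · exact hM i (Finset.mem_range_succ_iff.1 hi) x hx
    · exact hC (n - i) s hs x hx
  · have hzero : iteratedFDeriv ℝ n (fun y => χ y • ψ (s * ρ y)) x = 0 := by
      by_contra hne
      exact hx (tsupport_smul_subset_left χ _ (support_iteratedFDeriv_subset (𝕜 := ℝ) n hne))
    rw [hzero, norm_zero]
    have hC₀ (i : ℕ) : 0 ≤ n.choose i * M * C (n - i) := mul_nonneg (by positivity) (hC₀ _)
    exact mul_nonneg (Finset.sum_nonneg fun i _ => hC₀ i) (Real.exp_pos _).le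

lemma contDiff_smul_of_tsupport_subset (hU : IsOpen U) (hχ : ContDiff ℝ ∞ χ) (hχU : tsupport χ ⊆ U)
    {f : E → F} (hf : ContDiffOn ℝ ∞ f U) : ContDiff ℝ ∞ fun x => χ x • f x := by
  refine contMDiff_iff_contDiff.1 (contMDiff_of_tsupport fun x hx => ContDiffAt.contMDiffAt ?_)
  exact hχ.contDiffAt.smul
    (hf.contDiffAt (hU.mem_nhds (hχU (tsupport_smul_subset_left χ f hx))))

end Symbol

lemma exists_contDiff_cutoff {E : Type*} [NormedAddCommGroup E] [NormedSpace ℝ E]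
    [FiniteDimensional ℝ E] {K U : Set E} (hK : IsCompact K) (hU : IsOpen U) (hKU : K ⊆ U) :
    ∃ χ : E → ℝ, ContDiff ℝ ∞ χ ∧ HasCompactSupport χ ∧ tsupport χ ⊆ U ∧ ∀ x ∈ K, χ x = 1 := by
  obtain ⟨L, hL, hKL, hLU⟩ := exists_compact_between hK hU hKU
  obtain ⟨χ, hχ, -, hsupp, hone⟩ := exists_contMDiff_support_eq_eq_one_iff (n := ⊤)
    (modelWithCornersSelf ℝ E) (isOpen_interior (s := L)) hK.isClosed hKL
  have htsupp : tsupport χ ⊆ L := by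
    rw [tsupport, hsupp]
    exact closure_minimal interior_subset hL.isClosed
  exact ⟨χ, hχ.contDiff, hL.of_isClosed_subset (isClosed_tsupport χ) htsupp,
    htsupp.trans hLU, fun x hx => (hone x).1 hx⟩

lemma exists_seminorm_le_mul_of_withSeminorms {ι α E : Type*} [AddCommGroup E] [Module ℝ E]
    [TopologicalSpace E] {p : SeminormFamily ℝ E ι} (hp : WithSeminorms p) {q : Seminorm ℝ E}
    (hq : Continuous q) {x : α → E} {w : α → ℝ} (hw : ∀ i, 0 ≤ w i)
    (hx : ∀ k, ∃ C : ℝ, ∀ i, p k (x i) ≤ C * w i) :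
    ∃ C : ℝ, 0 ≤ C ∧ ∀ i, q (x i) ≤ C * w i := by
  obtain ⟨s, K, -, hK⟩ := Seminorm.bound_of_continuous hp q hq
  choose C hC using hx
  obtain ⟨M, hM⟩ := (s.finite_toSet.image C).bddAbove
  refine ⟨K * max M 0, by positivity, fun i => (hK (x i)).trans ?_⟩
  have hsup : s.sup p (x i) ≤ max M 0 * w i := by
    refine Seminorm.finset_sup_apply_le (mul_nonneg (le_max_right _ _) (hw i)) fun k hk =>
      (hC k i).trans (mul_le_mul_of_nonneg_right ?_ (hw i))
    exact (hM ⟨k, hk, rfl⟩).trans (le_max_left _ _)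
  calc (K • s.sup p) (x i) = K * s.sup p (x i) := rfl
    _ ≤ K * max M 0 * w i := by rw [mul_assoc]; gcongr

section Fourier

open FourierTransform SchwartzMap

variable {V : Type*} [NormedAddCommGroup V] [InnerProductSpace ℝ V] [FiniteDimensional ℝ V]
  [MeasurableSpace V] [BorelSpace V]

lemma exists_eLpNorm_one_fourierInv_le {α : Type*} {K : Set V} (hK : IsCompact K)
    {m : α → 𝓢(V, ℂ)} {w : α → ℝ} (hmK : ∀ i, tsupport (m i) ⊆ K) (hw : ∀ i, 0 ≤ w i)
    (hm : ∀ n : ℕ, ∃ C : ℝ, ∀ i x, ‖iteratedFDeriv ℝ n (m i) x‖ ≤ C * w i) :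
    ∃ C : ℝ, 0 ≤ C ∧ ∀ i, eLpNorm (𝓕⁻ (m i : V → ℂ)) 1 volume ≤ ENNReal.ofReal (C * w i) := by
  obtain ⟨R, hR⟩ := hK.exists_bound_of_continuousOn (f := fun x : V => x) continuousOn_id
  have hseminorm (k : ℕ × ℕ) :
      ∃ C : ℝ, ∀ i, schwartzSeminormFamily ℝ V ℂ k (m i) ≤ C * w i := by
    obtain ⟨C, hC⟩ := hm k.2
    refine ⟨max R 0 ^ k.1 * max C 0, fun i => SchwartzMap.seminorm_le_bound ℝ _ _ _
      (mul_nonneg (by positivity) (hw i)) fun x => ?_⟩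
    by_cases hx : x ∈ tsupport (m i)
    · rw [mul_assoc]
      gcongr
      · exact (hR x (hmK i hx)).trans (le_max_left _ _)
      · exact (hC i x).trans (mul_le_mul_of_nonneg_right (le_max_left _ _) (hw i))
    · have hzero : iteratedFDeriv ℝ k.2 (m i) x = 0 := by
        by_contra hne
        exact hx (support_iteratedFDeriv_subset (𝕜 := ℝ) k.2 hne)
      rw [hzero, norm_zero, mul_zero]
      exact mul_nonneg (by positivity) (hw i)
  -- `m ↦ ‖𝓕⁻ m‖_{L¹}` is a continuous seminorm on the Schwartz space.
  let T : 𝓢(V, ℂ) →L[ℝ] Lp ℂ 1 (volume : Measure V) :=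
    (SchwartzMap.toLpCLM ℝ ℂ 1 volume).comp (fourierInvCLM ℝ 𝓢(V, ℂ))
  obtain ⟨C, hC₀, hC⟩ := exists_seminorm_le_mul_of_withSeminorms (schwartz_withSeminorms ℝ V ℂ)
    (q := (normSeminorm ℝ _).comp T.toLinearMap) (continuous_norm.comp T.continuous) hw hseminorm
  refine ⟨C, hC₀, fun i => ?_⟩
  have hT : ‖T (m i)‖ = (eLpNorm (𝓕⁻ (m i) : 𝓢(V, ℂ)) 1 volume).toReal := SchwartzMap.norm_toLp
  have hfin : eLpNorm (𝓕⁻ (m i) : 𝓢(V, ℂ)) 1 volume ≠ ⊤ :=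
    (SchwartzMap.memLp _ 1 volume).eLpNorm_ne_top
  rw [← SchwartzMap.fourierInv_coe, ← ENNReal.ofReal_toReal hfin, ← hT]
  exact ENNReal.ofReal_le_ofReal (hC i)

lemma HasExpDecayDerivs.exists_schwartz_eqOn {a b r : ℝ} {ψ : ℝ → ℂ}
    (hψ : HasExpDecayDerivs a ψ) {K U : Set V} (hU : IsOpen U) (hK : IsCompact K) (hKU : K ⊆ U)
    {ρ : V → ℝ} (hρ : ContDiffOn ℝ ∞ ρ U) (ha : 0 ≤ a) (hr : 0 < r) (hρK : ∀ x ∈ K, r ≤ ρ x)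
    (hb : b < a * r) :
    ∃ C : ℝ, 0 ≤ C ∧ ∀ s, 0 ≤ s → ∃ m : 𝓢(V, ℂ), Set.EqOn m (fun ξ => ψ (s * ρ ξ)) K ∧
      eLpNorm (𝓕⁻ (m : V → ℂ)) 1 volume ≤ ENNReal.ofReal (C * Real.exp (-(b * s))) := by
  -- The cutoff spreads beyond `K`, where only `ρ > r₀` is available; `b < a * r` leaves room.
  obtain ⟨r₀, ⟨hbr₀, hr₀⟩, hr₀r⟩ : ∃ r₀, (b < a * r₀ ∧ 0 < r₀) ∧ r₀ < r := by
    have hnhds : ∀ᶠ r₀ in 𝓝 r, b < a * r₀ ∧ 0 < r₀ :=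
      (((continuous_const_mul a).tendsto r).eventually (lt_mem_nhds hb)).and (lt_mem_nhds hr)
    exact ((hnhds.filter_mono nhdsWithin_le_nhds).and (self_mem_nhdsWithin (s := Set.Iio r))).exists
  let U₀ : Set V := U ∩ ρ ⁻¹' Set.Ioi r₀
  have hU₀ : IsOpen U₀ := hρ.continuousOn.isOpen_inter_preimage hU isOpen_Ioi
  obtain ⟨χ, hχ, hχc, hχU₀, hχK⟩ := exists_contDiff_cutoff hK hU₀
    fun x hx => ⟨hKU hx, hr₀r.trans_le (hρK x hx)⟩
  have hρ₀ : ContDiffOn ℝ ∞ ρ U₀ := hρ.mono Set.inter_subset_left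
  have hsmooth (s : ℝ) : ContDiff ℝ ∞ fun ξ => χ ξ • ψ (s * ρ ξ) :=
    contDiff_smul_of_tsupport_subset hU₀ hχ hχU₀
      (hψ.contDiff.comp_contDiffOn (contDiffOn_const.mul hρ₀))
  let m (s : Set.Ici (0 : ℝ)) : 𝓢(V, ℂ) :=
    (hχc.smul_right (f' := fun ξ => ψ (s * ρ ξ))).toSchwartzMap (hsmooth s)
  have hm (s) : (m s : V → ℂ) = fun ξ => χ ξ • ψ (s * ρ ξ) := rfl
  have hderiv (n : ℕ) :
      ∃ C : ℝ, ∀ s x, ‖iteratedFDeriv ℝ n (m s) x‖ ≤ C * Real.exp (-(b * s)) := by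
    obtain ⟨C, hC⟩ := hψ.exists_norm_iteratedFDeriv_cutoff_smul_comp_le hU₀ hχ hχc hχU₀ hρ₀ ha
      hr₀.le (fun x hx => (hχU₀ hx).2.le) hbr₀ n
    simp only [hm]
    exact ⟨C, fun s => hC s s.2⟩
  have hsupp (s) : tsupport (m s) ⊆ tsupport χ := by
    rw [hm]; exact tsupport_smul_subset_left _ _
  obtain ⟨C, hC₀, hC⟩ :=
    exists_eLpNorm_one_fourierInv_le hχc hsupp (fun s => (Real.exp_pos _).le) hderiv
  refine ⟨C, hC₀, fun s hs => ⟨m ⟨s, hs⟩, fun ξ hξ => ?_, hC ⟨s, hs⟩⟩⟩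
  simp only [hm, hχK ξ hξ, one_smul]

end Fourier

/-! ### Fourier multipliers on frequency annuli -/

section Multiplier

open FourierTransform SchwartzMap ContinuousLinearMap
open scoped Convolution

variable {V F : Type*} [NormedAddCommGroup V] [InnerProductSpace ℝ V] [FiniteDimensional ℝ V]
  [MeasurableSpace V] [BorelSpace V] [NormedAddCommGroup F] [NormedSpace ℂ F]

lemma fourierInv_smul_fourier_eq_convolution [CompleteSpace F] {a : V → ℂ} {g : V → F}
    (ha : Integrable a) (hg : Integrable g) :
    𝓕⁻ (fun ξ => a ξ • 𝓕 g ξ) = 𝓕⁻ a ⋆[lsmul ℂ ℂ] g := by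
  ext x
  let modulated (ξ : V) : ℂ := Real.fourierChar ⟪ξ, x⟫ • a ξ
  have hmodulated : Integrable modulated := by
    simpa only [modulated, inner_neg_right, neg_neg] using
      (Real.fourierIntegral_convergent_iff (-x)).2 ha
  have hfourier (y : V) : 𝓕 modulated y = 𝓕⁻ a (x - y) := by
    rw [Real.fourier_eq, Real.fourierInv_eq]
    congr 1 with ξ
    rw [smul_smul, ← AddChar.map_add_eq_mul, inner_sub_right, neg_add_eq_sub]
  calc 𝓕⁻ (fun ξ => a ξ • 𝓕 g ξ) x = ∫ ξ, modulated ξ • 𝓕 g ξ := by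
        simp only [Real.fourierInv_eq, modulated, smul_assoc]
    _ = ∫ y, 𝓕 modulated y • g y := by
        simpa using! (VectorFourier.integral_fourierIntegral_smul_eq_flip (L := innerₗ V)
          Real.continuous_fourierChar continuous_inner hmodulated hg).symm
    _ = (𝓕⁻ a ⋆[lsmul ℂ ℂ] g) x := by simp only [convolution_lsmul_swap, hfourier]

lemma fourierInv_comp_smul (f : V → F) {R : ℝ} (hR : R ≠ 0) (x : V) :
    𝓕⁻ (fun ξ => f (R • ξ)) x = |(R ^ Module.finrank ℝ V)⁻¹| • 𝓕⁻ f (R⁻¹ • x) := by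
  have hinner (ξ : V) : ⟪R • ξ, R⁻¹ • x⟫ = ⟪ξ, x⟫ := by
    rw [inner_smul_left, inner_smul_right, conj_trivial, mul_inv_cancel_left₀ hR]
  rw [Real.fourierInv_eq, Real.fourierInv_eq, ← Measure.integral_comp_smul]
  simp only [hinner]

lemma eLpNorm_comp_smul {E ε : Type*} [NormedAddCommGroup E] [NormedSpace ℝ E]
    [FiniteDimensional ℝ E] [MeasurableSpace E] [BorelSpace E] (μ : Measure E)
    [μ.IsAddHaarMeasure] [TopologicalSpace ε] [ContinuousENorm ε] (f : E → ε) {R : ℝ} (hR : R ≠ 0)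
    (p : ℝ≥0∞) :
    eLpNorm (fun x => f (R • x)) p μ =
      ENNReal.ofReal |(R ^ Module.finrank ℝ E)⁻¹| ^ (1 / p).toReal * eLpNorm f p μ := by
  have hmap := (Homeomorph.smulOfNeZero R hR).measurableEmbedding.eLpNorm_map_measure
    (g := f) (p := p) (μ := μ)
  have hc : ENNReal.ofReal |(R ^ Module.finrank ℝ E)⁻¹| ≠ 0 := by simp [hR]
  rw [← smul_eq_mul, ← eLpNorm_smul_measure_of_ne_zero hc, ← Measure.map_addHaar_smul μ hR]
  exact hmap.symm

lemma eLpNorm_one_fourierInv_comp_smul (f : V → F) {R : ℝ} (hR : R ≠ 0) :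
    eLpNorm (𝓕⁻ fun ξ => f (R • ξ)) 1 volume = eLpNorm (𝓕⁻ f) 1 volume := by
  have hdilate : 𝓕⁻ (fun ξ => f (R • ξ)) =
      |(R ^ Module.finrank ℝ V)⁻¹| • fun x => 𝓕⁻ f (R⁻¹ • x) :=
    funext (fourierInv_comp_smul f hR)
  rw [hdilate, eLpNorm_const_smul, eLpNorm_comp_smul volume _ (inv_ne_zero hR), ← mul_assoc,
    Real.enorm_eq_ofReal_abs, abs_abs, div_one, ENNReal.toReal_one, ENNReal.rpow_one,
    ← ENNReal.ofReal_mul (abs_nonneg _), ← abs_mul, ← mul_inv, ← mul_pow, mul_inv_cancel₀ hR]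
  simp

lemma eLpNorm_fourierInv_smul_fourier_le [CompleteSpace F] {a : V → ℂ} {g : V → F}
    (ha : Integrable a) (hg : Integrable g) {p : ℝ≥0∞} (hp : 1 ≤ p) :
    eLpNorm (𝓕⁻ fun ξ => a ξ • 𝓕 g ξ) p volume ≤
      eLpNorm (𝓕⁻ a) 1 volume * eLpNorm g p volume := by
  have hmeas : AEStronglyMeasurable (𝓕⁻ a) :=
    (VectorFourier.fourierIntegral_continuous Real.continuous_fourierChar
      (L := -innerₗ V) continuous_inner.neg ha).aestronglyMeasurable
  rw [fourierInv_smul_fourier_eq_convolution ha hg]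
  refine (eLpNorm_convolution_le _ hmeas hg.aestronglyMeasurable hp).trans
    (mul_le_of_le_one_left' ?_)
  rw [← ofReal_norm, ENNReal.ofReal_le_one]
  exact opNorm_lsmul_le

lemma HasExpDecayDerivs.exists_eLpNorm_fourierInv_smul_fourier_le [CompleteSpace F] {ψ : ℝ → ℂ}
    {a b r₁ r₂ : ℝ} (hψ : HasExpDecayDerivs a ψ) (ha : 0 ≤ a) (hr₁ : 0 < r₁) (hb : b < a * r₁) :
    ∃ C : ℝ, 0 ≤ C ∧ ∀ {R t : ℝ}, 0 < R → 0 ≤ t → ∀ {p : ℝ≥0∞}, 1 ≤ p → ∀ {g : V → F},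
      Integrable g → (∀ ξ, 𝓕 g ξ ≠ 0 → ‖ξ‖ ∈ Set.Icc (R * r₁) (R * r₂)) →
      eLpNorm (𝓕⁻ fun ξ => ψ (t * ‖ξ‖) • 𝓕 g ξ) p volume ≤
        ENNReal.ofReal (C * Real.exp (-(b * (R * t)))) * eLpNorm g p volume := by
  let annulus : Set V := Metric.closedBall 0 r₂ ∩ {ξ | r₁ ≤ ‖ξ‖}
  have hannulus : IsCompact annulus :=
    (isCompact_closedBall _ _).inter_right (isClosed_le continuous_const continuous_norm)
  have hnorm : ContDiffOn ℝ ∞ (fun ξ : V => ‖ξ‖) {0}ᶜ := fun ξ hξ =>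
    (contDiffAt_norm ℝ hξ).contDiffWithinAt
  obtain ⟨C, hC₀, hC⟩ := hψ.exists_schwartz_eqOn isOpen_compl_singleton hannulus
    (fun ξ hξ => norm_pos_iff.1 (hr₁.trans_le hξ.2)) hnorm ha hr₁ (fun ξ hξ => hξ.2) hb
  refine ⟨C, hC₀, fun {R t} hR ht {p} hp {g} hg hsupp => ?_⟩
  obtain ⟨m, hm, hmC⟩ := hC (R * t) (mul_nonneg hR.le ht)
  have hsymbol (ξ : V) : ψ (t * ‖ξ‖) • 𝓕 g ξ = m (R⁻¹ • ξ) • 𝓕 g ξ := by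
    rcases eq_or_ne (𝓕 g ξ) 0 with hξ | hξ
    · simp only [hξ, smul_zero]
    have hscale : ‖R⁻¹ • ξ‖ = R⁻¹ * ‖ξ‖ := norm_smul_of_nonneg (inv_nonneg.2 hR.le) ξ
    have hmem : R⁻¹ • ξ ∈ annulus := by
      simp only [annulus, Set.mem_inter_iff, mem_closedBall_zero_iff, Set.mem_ofPred_eq, hscale,
        le_inv_mul_iff₀ hR, inv_mul_le_iff₀ hR]
      exact (hsupp ξ hξ).symm
    have hvalue : m (R⁻¹ • ξ) = ψ (R * t * ‖R⁻¹ • ξ‖) := hm hmem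
    rw [hvalue, hscale, mul_assoc, mul_left_comm, mul_inv_cancel_left₀ hR.ne']
  simp only [hsymbol]
  refine (eLpNorm_fourierInv_smul_fourier_le (m.integrable.comp_smul (inv_ne_zero hR.ne')) hg
    hp).trans ?_
  gcongr
  rw [eLpNorm_one_fourierInv_comp_smul m (inv_ne_zero hR.ne')]
  exact hmC

end Multiplier

/-! ### The Poisson multiplier on Littlewood–Paley blocks -/

/-- The profile `(1 + r) e^{-r}`, whose value at `r = t|ξ|` is the Poisson multiplier. It is
complex-valued because it acts as a Fourier multiplier. -/
def poissonProfile (r : ℝ) : ℂ :=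
  (1 + r) * cexp (-r)

lemma iteratedDeriv_poissonProfile (n : ℕ) :
    iteratedDeriv n poissonProfile = fun r : ℝ => (-1) ^ n * ((1 - n + r) * cexp (-r)) := by
  induction n with
  | zero => ext r; simp [poissonProfile]
  | succ n ih =>
    rw [iteratedDeriv_succ, ih]
    ext r
    have hexp : HasDerivAt (fun z : ℂ => cexp (-z)) (cexp (-r) * -1) r := (hasDerivAt_neg _).cexp
    have hlin : HasDerivAt (fun z : ℂ => 1 - n + z) 1 (r : ℂ) := (hasDerivAt_id _).const_add _
    refine ((hlin.mul hexp).const_mul ((-1) ^ n)).comp_ofReal.deriv.trans ?_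
    push_cast
    ring

lemma hasExpDecayDerivs_poissonProfile {a : ℝ} (ha : a < 1) :
    HasExpDecayDerivs a poissonProfile where
  contDiff := (contDiff_const.add ofRealCLM.contDiff).mul ofRealCLM.contDiff.neg.cexp
  exists_norm_iteratedDeriv_le n := by
    obtain ⟨B, hB⟩ : ∃ B : ℝ, ∀ r, 0 ≤ r → 1 + r ≤ B * Real.exp ((1 - a) * r) :=
      ⟨_, fun r hr => by simpa only [pow_one] using one_add_pow_le_mul_exp (sub_pos.2 ha) 1 hr⟩
    refine ⟨(1 + n) * B, fun r hr => ?_⟩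
    have hlin : ‖(1 - n + r : ℂ)‖ ≤ (1 + n) * (1 + r) := by
      calc ‖(1 - n + r : ℂ)‖ ≤ ‖(1 : ℂ)‖ + ‖(n : ℂ)‖ + ‖(r : ℂ)‖ :=
            (norm_add_le _ _).trans (by gcongr; exact norm_sub_le _ _)
        _ = 1 + n + r := by simp [abs_of_nonneg hr]
        _ ≤ (1 + n) * (1 + r) := by nlinarith [mul_nonneg (Nat.cast_nonneg (α := ℝ) n) hr]
    calc ‖iteratedDeriv n poissonProfile r‖ = ‖(1 - n + r : ℂ)‖ * Real.exp (-r) := by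
          simp [iteratedDeriv_poissonProfile, norm_exp]
      _ ≤ ((1 + n) * (B * Real.exp ((1 - a) * r))) * Real.exp (-r) := by
          gcongr
          exact hlin.trans (by gcongr; exact hB r hr)
      _ = (1 + n) * B * Real.exp (-(a * r)) := by
          rw [← mul_assoc, mul_assoc _ (Real.exp _), ← Real.exp_add]
          congr 2
          ring

section PaperConvention

open FourierTransform

variable {d : ℕ}

/-- The inverse Fourier transform `F⁻¹[h](x) = (2π)^{-d} ∫ e^{i x·ξ} h(ξ) dξ`, in the
normalization matching `FT`. -/
def FTInv (h : Rd d → ℂ) (x : Rd d) : ℂ :=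
  (((2 * Real.pi) ^ d : ℝ) : ℂ)⁻¹ * ∫ ξ : Rd d, cexp (I * ⟪x, ξ⟫) * h ξ

lemma FT_eq_fourier (f : Rd d → ℂ) (ξ : Rd d) : FT f ξ = 𝓕 f ((2 * Real.pi)⁻¹ • ξ) := by
  rw [Real.fourier_eq', FT]
  refine integral_congr_ae (Eventually.of_forall fun x => ?_)
  have hpi : (Real.pi : ℂ) ≠ 0 := ofReal_ne_zero.2 Real.pi_ne_zero
  simp only [smul_eq_mul, inner_smul_right]
  congr 2
  push_cast
  field_simp

lemma fourier_eq_FT (f : Rd d → ℂ) (ξ : Rd d) : 𝓕 f ξ = FT f ((2 * Real.pi) • ξ) := by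
  rw [FT_eq_fourier, inv_smul_smul₀ Real.two_pi_pos.ne']

lemma FTInv_eq_fourierInv (h : Rd d → ℂ) : FTInv h = 𝓕⁻ fun ξ => h ((2 * Real.pi) • ξ) := by
  ext x
  have hexp (ξ : Rd d) :
      cexp (↑(2 * Real.pi * ⟪ξ, x⟫) * I) = cexp (I * ⟪x, (2 * Real.pi) • ξ⟫) := by
    rw [inner_smul_right, real_inner_comm, mul_comm]
  simp only [Real.fourierInv_eq', FTInv, hexp, smul_eq_mul]
  rw [Measure.integral_comp_smul volume fun ξ => cexp (I * ⟪x, ξ⟫) * h ξ,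
    finrank_euclideanSpace_fin, abs_of_pos (by positivity), real_smul, ofReal_inv]

lemma HasExpDecayDerivs.exists_eLpNorm_FTInv_mul_FT_le {ψ : ℝ → ℂ} {a b r₁ r₂ : ℝ}
    (hψ : HasExpDecayDerivs a ψ) (ha : 0 ≤ a) (hr₁ : 0 < r₁) (hb : b < a * r₁) :
    ∃ C : ℝ, 0 ≤ C ∧ ∀ {R t : ℝ}, 0 < R → 0 ≤ t → ∀ {p : ℝ≥0∞}, 1 ≤ p → ∀ {g : Rd d → ℂ},
      Integrable g → (∀ ξ, FT g ξ ≠ 0 → ‖ξ‖ ∈ Set.Icc (R * r₁) (R * r₂)) →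
      eLpNorm (FTInv fun ξ => ψ (t * ‖ξ‖) * FT g ξ) p volume ≤
        ENNReal.ofReal (C * Real.exp (-(b * (R * t)))) * eLpNorm g p volume := by
  obtain ⟨C, hC₀, hC⟩ := hψ.exists_eLpNorm_fourierInv_smul_fourier_le (V := Rd d) (F := ℂ)
    (r₂ := r₂) ha hr₁ hb
  refine ⟨C, hC₀, fun {R t} hR ht {p} hp {g} hg hsupp => ?_⟩
  have htwo_pi : 0 < 2 * Real.pi := Real.two_pi_pos
  have hnorm (ξ : Rd d) : ‖(2 * Real.pi) • ξ‖ = 2 * Real.pi * ‖ξ‖ :=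
    norm_smul_of_nonneg htwo_pi.le ξ
  have hfourier : ∀ ξ, 𝓕 g ξ ≠ 0 →
      ‖ξ‖ ∈ Set.Icc (R / (2 * Real.pi) * r₁) (R / (2 * Real.pi) * r₂) := fun ξ hξ => by
    have hmem := hsupp ((2 * Real.pi) • ξ) (by rwa [← fourier_eq_FT])
    rw [hnorm, Set.mem_Icc] at hmem
    rwa [Set.mem_Icc, div_mul_eq_mul_div, div_mul_eq_mul_div, div_le_iff₀' htwo_pi,
      le_div_iff₀' htwo_pi]
  have hmain := hC (div_pos hR htwo_pi) (mul_nonneg ht htwo_pi.le) hp hg hfourier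
  rw [div_mul_eq_mul_div, ← mul_assoc R, mul_div_cancel_right₀ _ htwo_pi.ne'] at hmain
  simpa only [FTInv_eq_fourierInv, hnorm, fourier_eq_FT, smul_eq_mul, mul_assoc] using hmain

namespace LPData

variable (P : LPData d) (j : ℤ)

/-- The dyadic dilate `φ_j(x) = 2^{dj} φ₀(2^j x)`, the convolution kernel of `Δ_j`. -/
def kernel (x : Rd d) : ℂ :=
  (((2:ℝ) ^ ((d : ℤ) * j) : ℝ) : ℂ) * P.φ ((2:ℝ) ^ j • x)

lemma integrable_kernel : Integrable (P.kernel j) :=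
  (P.φ.integrable.comp_smul (zpow_ne_zero j two_ne_zero)).const_mul _

lemma FT_kernel (ξ : Rd d) : FT (P.kernel j) ξ = FT P.φ ((2:ℝ) ^ (-j) • ξ) := by
  have h2j : (0:ℝ) < (2:ℝ) ^ j := zpow_pos two_pos j
  have hinner (x : Rd d) : ⟪(2:ℝ) ^ j • x, (2:ℝ) ^ (-j) • ξ⟫ = ⟪x, ξ⟫ := by
    rw [inner_smul_left, inner_smul_right, zpow_neg, conj_trivial, mul_inv_cancel_left₀ h2j.ne']
  have hdilate := Measure.integral_comp_smul volume
    (fun x => cexp (-I * ⟪x, (2:ℝ) ^ (-j) • ξ⟫) * P.φ x) ((2:ℝ) ^ j)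
  simp only [hinner, finrank_euclideanSpace_fin, ← zpow_natCast, ← zpow_mul,
    mul_comm j, abs_of_pos (inv_pos.2 (zpow_pos (two_pos (α := ℝ)) _))] at hdilate
  simp only [FT, kernel, mul_left_comm (cexp _)]
  rw [integral_const_mul, hdilate, real_smul, ← mul_assoc, ← ofReal_mul,
    mul_inv_cancel₀ (zpow_ne_zero _ two_ne_zero), ofReal_one, one_mul]

lemma LP_eq_convolution (f : Rd d → ℂ) :
    LP P j f = P.kernel j ⋆[ContinuousLinearMap.mul ℂ ℂ] f := rfl

variable {f : Rd d → ℂ}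

lemma integrable_LP (hf : Integrable f) : Integrable (LP P j f) :=
  (P.integrable_kernel j).integrable_convolution (ContinuousLinearMap.mul ℂ ℂ) hf

lemma FT_LP (hf : Integrable f) (ξ : Rd d) :
    FT (LP P j f) ξ = FT P.φ ((2:ℝ) ^ (-j) • ξ) * FT f ξ := by
  rw [← P.FT_kernel, LP_eq_convolution, FT_eq_fourier, FT_eq_fourier, FT_eq_fourier,
    Real.fourier_mul_convolution_eq (P.integrable_kernel j) hf]

lemma norm_mem_Icc_of_FT_LP_ne_zero (hf : Integrable f) {ξ : Rd d} (hξ : FT (LP P j f) ξ ≠ 0) :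
    ‖ξ‖ ∈ Set.Icc ((2:ℝ) ^ j * (1 / 2)) ((2:ℝ) ^ j * 2) := by
  have h2j : (0:ℝ) < (2:ℝ) ^ j := zpow_pos two_pos j
  rw [P.FT_LP j hf] at hξ
  have hannulus := P.hsupp _ (left_ne_zero_of_mul hξ)
  rwa [norm_smul_of_nonneg (zpow_nonneg zero_le_two _), zpow_neg, le_inv_mul_iff₀ h2j,
    inv_mul_le_iff₀ h2j] at hannulus

end LPData

end PaperConvention

theorem poisson_multiplier_dissipative_estimate_general (d : ℕ) :
    ∃ C > (0:ℝ), ∃ c > (0:ℝ), ∀ P : LPData d, ∀ p : ℝ≥0∞, 1 ≤ p → ∀ j : ℤ, ∀ t : ℝ, 0 ≤ t →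
      ∀ f : Rd d → ℂ, Integrable f →
      eLpNorm (fun x : Rd d =>
          (((2 * Real.pi) ^ d : ℝ) : ℂ)⁻¹ *
            ∫ ξ : Rd d, cexp (I * ⟪x, ξ⟫) * (1 + ↑(t * ‖ξ‖)) * cexp (-↑(t * ‖ξ‖)) *
              FT P.φ ((2:ℝ) ^ (-j) • ξ) * FT f ξ) p volume
        ≤ ENNReal.ofReal (C * Real.exp (-c * (2:ℝ) ^ j * t)) * eLpNorm (LP P j f) p volume := by
  -- The annulus has inner radius `1/2`, so any `a < 1` and any rate `b < a / 2` would do.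
  have hdecay : HasExpDecayDerivs (1 / 2) poissonProfile :=
    hasExpDecayDerivs_poissonProfile (by norm_num)
  obtain ⟨C, hC₀, hC⟩ := hdecay.exists_eLpNorm_FTInv_mul_FT_le (d := d) (b := 1 / 8) (r₁ := 1 / 2)
    (r₂ := 2) (by norm_num) (by norm_num) (by norm_num)
  refine ⟨C + 1, by positivity, 1 / 8, by norm_num, fun P p hp j t ht f hf => ?_⟩
  have hblock := hC (zpow_pos two_pos j) ht hp (P.integrable_LP j hf)
    fun ξ hξ => P.norm_mem_Icc_of_FT_LP_ne_zero j hf hξ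
  unfold FTInv at hblock
  simp only [poissonProfile, P.FT_LP j hf, ← mul_assoc] at hblock
  refine hblock.trans ?_
  rw [neg_mul, neg_mul]
  gcongr
  exact le_add_of_nonneg_right zero_le_one

/-- Dissipative estimate on Littlewood–Paley blocks for the
multipliers `(1 + t|ξ|) e^{-t|ξ|}`. -/
theorem poisson_multiplier_dissipative_estimate (d : ℕ) (hd : 1 ≤ d) (P : LPData d) :
    ∃ C > (0:ℝ), ∃ c > (0:ℝ), ∀ p : ℝ≥0∞, 1 ≤ p → ∀ j : ℤ, ∀ t : ℝ, 0 < t →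
      ∀ f : SchwartzMap (Rd d) ℂ,
      eLpNorm (fun x : Rd d =>
          (((2 * Real.pi) ^ d : ℝ) : ℂ)⁻¹ *
            ∫ ξ : Rd d, Complex.exp (Complex.I * (↑(⟪x, ξ⟫) : ℂ)) *
              ((1 : ℂ) + (↑(t * ‖ξ‖) : ℂ)) * Complex.exp (-(↑(t * ‖ξ‖) : ℂ)) *
              FT (⇑P.φ) ((2:ℝ) ^ (-j) • ξ) * FT (⇑f) ξ) p volume
        ≤ ENNReal.ofReal (C * Real.exp (-c * (2:ℝ) ^ j * t)) *
            eLpNorm (LP P j (⇑f)) p volume := by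
  obtain ⟨C, hC, c, hc, hblock⟩ := poisson_multiplier_dissipative_estimate_general d
  exact ⟨C, hC, c, hc, fun p hp j t ht f => hblock P p hp j t ht.le f f.integrable⟩
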